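/- The map Φ⁻¹ : M³ → M³ given by Φ⁻¹(x,y,z) = (m(x,y), m(y,z), m(z,x)), where m is the midpoint map of the solvable symmetric surface, has Jacobian determinant at (x₀,x₁,x₂) equal to (1/16)·sech(2(a₀−a₁))·sech(2(a₁−a₂))·sech(2(a₂−a₀)). -/

import Mathlib

noncomputable def midM (x y : ℝ × ℝ) : ℝ × ℝ :=
  ((x.1 + y.1) / 2, (x.2 + y.2) / (2 * Real.cosh (2 * (x.1 - y.1))))

/-- The map Φ⁻¹(x,y,z) = (m(x,y), m(y,z), m(z,x)). -/
noncomputable def PhiInv (p : (ℝ × ℝ) × (ℝ × ℝ) × (ℝ × ℝ)) :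
    (ℝ × ℝ) × (ℝ × ℝ) × (ℝ × ℝ) :=
  (midM p.1 p.2.1, midM p.2.1 p.2.2, midM p.2.2 p.1)

/-!
Write points of `M` as `(a, ℓ)`. The `a`-coordinates of `Φ⁻¹(x, y, z)` depend only on those of
`x, y, z`, through the cyclic averaging matrix `C`; for fixed `a`-coordinates, the `ℓ`-coordinates
transform linearly by `C` with its rows rescaled by the factors `sech`. Once the `a`-coordinates
are listed before the `ℓ`-coordinates, the Jacobian matrix is therefore block triangular, and its
determinant is `(det C)² = (1/4)²` times the product of the three factors.
-/

open Matrix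

lemma det_circulant_three {R : Type*} [CommRing R] (a b c : R) :
    (circulant ![a, b, c]).det = a ^ 3 + b ^ 3 + c ^ 3 - 3 * a * b * c := by
  rw [det_fin_three]
  simp only [circulant_apply, Fin.isValue, sub_self, Fin.reduceSub, cons_val]
  ring

lemma circulant_three_mulVec {R : Type*} [NonUnitalNonAssocSemiring R] (a b c p q r : R) :
    circulant ![a, b, c] *ᵥ ![p, q, r] =
      ![a * p + c * q + b * r, b * p + a * q + c * r, c * p + b * q + a * r] := by
  ext i
  fin_cases i <;> simp [mulVec, dotProduct, Fin.sum_univ_three, circulant_apply]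

lemma det_fromBlocks_diagonal_mul {n R : Type*} [Fintype n] [DecidableEq n] [CommRing R]
    (C B : Matrix n n R) (d : n → R) :
    (fromBlocks C 0 B (diagonal d * C)).det = C.det ^ 2 * ∏ i, d i := by
  rw [det_fromBlocks_zero₁₂, det_mul, det_diagonal]
  ring

/-- The partial derivative of the `ℓ`-coordinate of `midM x y` with respect to `x.1`, which is also
the negative of its partial derivative with respect to `y.1`. -/
noncomputable def midMShear (x y : ℝ × ℝ) : ℝ :=
  -((x.2 + y.2) * Real.sinh (2 * (x.1 - y.1)) / Real.cosh (2 * (x.1 - y.1)) ^ 2)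

/-- The Fréchet derivative at `(x, y)` of the midpoint map, from which that of `PhiInv` is
assembled; in its definition `a` and `l` are the coordinate functionals on `M`. -/
noncomputable def midMDeriv (x y : ℝ × ℝ) : (ℝ × ℝ) × (ℝ × ℝ) →L[ℝ] ℝ × ℝ :=
  let a := ContinuousLinearMap.fst ℝ ℝ ℝ
  let l := ContinuousLinearMap.snd ℝ ℝ ℝ
  ((1 / 2 : ℝ) • a.coprod a).prod
    ((1 / (2 * Real.cosh (2 * (x.1 - y.1)))) • l.coprod l + midMShear x y • a.coprod (-a))

lemma midMDeriv_apply (x y u v : ℝ × ℝ) :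
    midMDeriv x y (u, v) =
      ((u.1 + v.1) / 2, (u.2 + v.2) / (2 * Real.cosh (2 * (x.1 - y.1))) +
        midMShear x y * (u.1 - v.1)) := by
  ext <;> simp only [midMDeriv, ContinuousLinearMap.prod_apply, ContinuousLinearMap.coprod_apply,
    ContinuousLinearMap.coe_fst', ContinuousLinearMap.coe_snd', _root_.add_apply,
    _root_.smul_apply, _root_.neg_apply, smul_eq_mul] <;> ring

lemma hasFDerivAt_midM (x y : ℝ × ℝ) :
    HasFDerivAt (fun q : (ℝ × ℝ) × (ℝ × ℝ) ↦ midM q.1 q.2) (midMDeriv x y) (x, y) := by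
  have h_fst := hasFDerivAt_fst (𝕜 := ℝ) (p := (x, y))
  have h_snd := hasFDerivAt_snd (𝕜 := ℝ) (p := (x, y))
  have h_diff := (h_fst.fst.fun_sub h_snd.fst).const_mul 2
  have h_scale := (((Real.hasDerivAt_cosh (2 * (x.1 - y.1))).const_mul 2).fun_inv
    (by positivity)).comp_hasFDerivAt (x, y) h_diff
  have h_mid := ((h_fst.fst.fun_add h_snd.fst).mul_const (2⁻¹ : ℝ)).prodMk
    ((h_fst.snd.fun_add h_snd.snd).fun_mul h_scale)
  refine h_mid.congr_fderiv (ContinuousLinearMap.ext fun ⟨u, v⟩ ↦ ?_)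
  simp only [midMDeriv_apply, midMShear, ContinuousLinearMap.prod_apply,
    ContinuousLinearMap.comp_apply, ContinuousLinearMap.coe_fst', ContinuousLinearMap.coe_snd',
    _root_.add_apply, _root_.sub_apply, _root_.smul_apply, smul_eq_mul, Function.comp_apply]
  congr 1
  · ring
  · field_simp
    ring

lemma fderiv_PhiInv_apply (x y z u v w : ℝ × ℝ) :
    fderiv ℝ PhiInv (x, y, z) (u, v, w) =
      (midMDeriv x y (u, v), midMDeriv y z (v, w), midMDeriv z x (w, u)) := by
  have h_fst := hasFDerivAt_fst (𝕜 := ℝ) (p := (x, y, z))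
  have h_snd := hasFDerivAt_snd (𝕜 := ℝ) (p := (x, y, z))
  have h_xy := (hasFDerivAt_midM x y).comp (x, y, z) (h_fst.prodMk h_snd.fst)
  have h_yz := (hasFDerivAt_midM y z).comp (x, y, z) (h_snd.fst.prodMk h_snd.snd)
  have h_zx := (hasFDerivAt_midM z x).comp (x, y, z) (h_snd.snd.prodMk h_fst)
  have h_PhiInv : HasFDerivAt PhiInv _ (x, y, z) := h_xy.prodMk (h_yz.prodMk h_zx)
  rw [h_PhiInv.fderiv]
  rfl

/-- Coordinates on `M³` listing the three `a`-coordinates (`Sum.inl`) before the three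
`ℓ`-coordinates (`Sum.inr`), the order that makes the derivative of `PhiInv` block triangular. -/
def blockCoords : ((ℝ × ℝ) × (ℝ × ℝ) × (ℝ × ℝ)) ≃ₗ[ℝ] (Fin 3 ⊕ Fin 3 → ℝ) where
  toFun p := Sum.elim ![p.1.1, p.2.1.1, p.2.2.1] ![p.1.2, p.2.1.2, p.2.2.2]
  invFun f := ((f (.inl 0), f (.inr 0)), (f (.inl 1), f (.inr 1)), (f (.inl 2), f (.inr 2)))
  map_add' p q := by ext (i | i) <;> fin_cases i <;> rfl
  map_smul' r p := by ext (i | i) <;> fin_cases i <;> rfl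
  left_inv _ := rfl
  right_inv f := by ext (i | i) <;> fin_cases i <;> rfl

lemma blockCoords_apply (u v w : ℝ × ℝ) :
    blockCoords (u, v, w) = Sum.elim ![u.1, v.1, w.1] ![u.2, v.2, w.2] :=
  rfl

/-- The matrix of the derivative of `PhiInv` at `(x, y, z)` in the coordinates `blockCoords`. -/
noncomputable def jacobianMatrix (x y z : ℝ × ℝ) : Matrix (Fin 3 ⊕ Fin 3) (Fin 3 ⊕ Fin 3) ℝ :=
  fromBlocks (circulant ![1 / 2, 0, 1 / 2]) 0
    (diagonal ![midMShear x y, midMShear y z, midMShear z x] * circulant ![1, 0, -1])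
    (diagonal ![1 / Real.cosh (2 * (x.1 - y.1)), 1 / Real.cosh (2 * (y.1 - z.1)),
      1 / Real.cosh (2 * (z.1 - x.1))] * circulant ![1 / 2, 0, 1 / 2])

lemma blockCoords_fderiv_PhiInv (x y z : ℝ × ℝ) (p : (ℝ × ℝ) × (ℝ × ℝ) × (ℝ × ℝ)) :
    blockCoords (fderiv ℝ PhiInv (x, y, z) p) = jacobianMatrix x y z *ᵥ blockCoords p := by
  obtain ⟨u, v, w⟩ := p
  rw [fderiv_PhiInv_apply, blockCoords_apply, blockCoords_apply, jacobianMatrix,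
    fromBlocks_mulVec]
  simp only [midMDeriv_apply, Sum.elim_comp_inl, Sum.elim_comp_inr, zero_mulVec, add_zero,
    ← mulVec_mulVec, circulant_three_mulVec]
  congr 1
  · congrm ![?_, ?_, ?_] <;> ring
  · ext i
    rw [Pi.add_apply, mulVec_diagonal, mulVec_diagonal]
    fin_cases i <;> simp only [Fin.zero_eta, Fin.mk_one, Fin.reduceFinMk, cons_val] <;> ring

lemma det_jacobianMatrix (x y z : ℝ × ℝ) :
    (jacobianMatrix x y z).det =
      (1 / 16) * (1 / Real.cosh (2 * (x.1 - y.1))) * (1 / Real.cosh (2 * (y.1 - z.1))) *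
        (1 / Real.cosh (2 * (z.1 - x.1))) := by
  rw [jacobianMatrix, det_fromBlocks_diagonal_mul, det_circulant_three, Fin.prod_univ_three]
  simp only [Fin.isValue, cons_val]
  ring

/-- Jacobian determinant of Φ⁻¹. -/
theorem jacobian_PhiInv (x₀ x₁ x₂ : ℝ × ℝ) :
    (fderiv ℝ PhiInv (x₀, x₁, x₂)).det =
      (1 / 16) * (1 / Real.cosh (2 * (x₀.1 - x₁.1))) *
        (1 / Real.cosh (2 * (x₁.1 - x₂.1))) *
        (1 / Real.cosh (2 * (x₂.1 - x₀.1))) := by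
  have conj_eq_toLin' : blockCoords.toLinearMap ∘ₗ (fderiv ℝ PhiInv (x₀, x₁, x₂)).toLinearMap ∘ₗ
      blockCoords.symm.toLinearMap = toLin' (jacobianMatrix x₀ x₁ x₂) := by
    refine LinearMap.ext fun f ↦ ?_
    simp [blockCoords_fderiv_PhiInv]
  rw [ContinuousLinearMap.det, ← LinearMap.det_conj _ blockCoords, conj_eq_toLin',
    LinearMap.det_toLin', det_jacobianMatrix]
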